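/- Fix d ≥ 1 and positive reals r, s. For every λ ∈ (0,∞)^d, the Kullback–Leibler risk R(λ, p_J) = Σ_{x∈ℕ^d} p_r(x|λ) Σ_{y∈ℕ^d} p_s(y|λ) log(p_s(y|λ)/p_J(y|x)) is strictly less than 0.52 · d · log((r+s)/r). -/

import Mathlib

/-- Joint pmf of `d` independent Poisson variables with means `c * lam i`. -/
noncomputable def poissonPMF (d : ℕ) (c : ℝ) (lam : Fin d → ℝ) (x : Fin d → ℕ) : ℝ :=
  ∏ i, Real.exp (-(c * lam i)) * (c * lam i) ^ (x i) / (Nat.factorial (x i) : ℝ)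

/-- Bayesian predictive distribution based on the Jeffreys prior. -/
noncomputable def pJ (d : ℕ) (r s : ℝ) (x y : Fin d → ℕ) : ℝ :=
  (r / (r + s)) ^ ((∑ i, (x i : ℝ)) + (d : ℝ) / 2) * (s / (r + s)) ^ (∑ i, y i)
    * ∏ i, Real.Gamma ((x i : ℝ) + (y i : ℝ) + 1 / 2)
        / (Real.Gamma ((x i : ℝ) + 1 / 2) * (Nat.factorial (y i) : ℝ))

/-- Kullback–Leibler risk of a predictive distribution `q` (with `q x y = q(y; x)`). -/
noncomputable def klRisk (d : ℕ) (r s : ℝ) (lam : Fin d → ℝ)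
    (q : (Fin d → ℕ) → (Fin d → ℕ) → ℝ) : ℝ :=
  ∑' x : Fin d → ℕ, poissonPMF d r lam x *
    ∑' y : Fin d → ℕ, poissonPMF d s lam y * Real.log (poissonPMF d s lam y / q x y)

noncomputable def PW (m : ℝ) (k : ℕ) : ℝ := Real.exp (-m) * m ^ k / (Nat.factorial k : ℝ)

noncomputable def Ex (m : ℝ) (f : ℕ → ℝ) : ℝ := ∑' k, PW m k * f k

def Bd (f : ℕ → ℝ) : Prop := ∃ C : ℝ, 0 ≤ C ∧ ∀ k, |f k| ≤ C * 2 ^ k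

lemma Bd.succ {f : ℕ → ℝ} (h : Bd f) : Bd (fun k => f (k + 1)) := by
  obtain ⟨C, hC, h⟩ := h
  refine ⟨C * 2, by positivity, fun k => (h (k + 1)).trans (le_of_eq (by ring))⟩

lemma Bd.add {f g : ℕ → ℝ} (hf : Bd f) (hg : Bd g) : Bd (fun k => f k + g k) := by
  obtain ⟨C, hC, hf⟩ := hf
  obtain ⟨D, hD, hg⟩ := hg
  refine ⟨C + D, by positivity, fun k => (abs_add_le _ _).trans ?_⟩
  rw [add_mul]; exact add_le_add (hf k) (hg k)

lemma Bd.const_mul {f : ℕ → ℝ} (c : ℝ) (hf : Bd f) : Bd (fun k => c * f k) := by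
  obtain ⟨C, hC, hf⟩ := hf
  refine ⟨|c| * C, by positivity, fun k => ?_⟩
  rw [abs_mul, mul_assoc]
  exact mul_le_mul_of_nonneg_left (hf k) (abs_nonneg _)

lemma Bd.const (c : ℝ) : Bd (fun _ => c) :=
  ⟨|c|, abs_nonneg _, fun k => le_mul_of_one_le_right (abs_nonneg _) (one_le_pow₀ (by norm_num))⟩

lemma Bd.of_le {f : ℕ → ℝ} (h : ∀ k, |f k| ≤ (k : ℝ) + 1) : Bd f := by
  refine ⟨1, by norm_num, fun k => (h k).trans ?_⟩
  rw [one_mul]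
  have : k + 1 ≤ 2 ^ k := Nat.lt_two_pow_self
  exact_mod_cast this

lemma Bd.id : Bd (fun k => (k : ℝ)) :=
  Bd.of_le fun k => by rw [abs_of_nonneg (by positivity)]; linarith

lemma summable_pow2 (m C : ℝ) : Summable (fun k : ℕ => m ^ k / (Nat.factorial k : ℝ) * (C * 2 ^ k)) := by
  have := (Real.summable_pow_div_factorial (2 * m)).mul_left C
  refine this.congr fun k => ?_
  rw [mul_pow]; ring

lemma summable_aux {m : ℝ} {f : ℕ → ℝ} (hf : Bd f) :
    Summable (fun k : ℕ => m ^ k / (Nat.factorial k : ℝ) * f k) := by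
  obtain ⟨C, hC, hf⟩ := hf
  refine Summable.of_norm_bounded (summable_pow2 |m| C) fun k => ?_
  rw [norm_mul, norm_div, norm_pow, Real.norm_eq_abs, Real.norm_eq_abs, Real.norm_eq_abs,
    Nat.abs_cast]
  exact mul_le_mul_of_nonneg_left (hf k) (by positivity)

lemma PW_eq (m : ℝ) (f : ℕ → ℝ) (k : ℕ) :
    PW m k * f k = Real.exp (-m) * (m ^ k / (Nat.factorial k : ℝ) * f k) := by
  unfold PW; ring

lemma summable_PW {m : ℝ} {f : ℕ → ℝ} (hf : Bd f) : Summable (fun k => PW m k * f k) := by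
  refine ((summable_aux (m := m) hf).mul_left (Real.exp (-m))).congr fun k => ?_
  rw [PW_eq]

lemma hasSum_PW {m : ℝ} {f : ℕ → ℝ} (hf : Bd f) : HasSum (fun k => PW m k * f k) (Ex m f) :=
  (summable_PW hf).hasSum

lemma Ex_eq (m : ℝ) (f : ℕ → ℝ) :
    Ex m f = Real.exp (-m) * ∑' k : ℕ, m ^ k / (Nat.factorial k : ℝ) * f k := by
  unfold Ex
  rw [← tsum_mul_left]
  exact tsum_congr fun k => PW_eq m f k

lemma hasDeriv_aux {f : ℕ → ℝ} (hf : Bd f) (m : ℝ) :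
    HasDerivAt (fun m : ℝ => ∑' k : ℕ, m ^ k / (Nat.factorial k : ℝ) * f k)
      (∑' k : ℕ, m ^ k / (Nat.factorial k : ℝ) * f (k + 1)) m := by
  have hf0 := hf
  obtain ⟨C, hC, hf⟩ := hf
  set R : ℝ := |m| + 1
  have hR : 0 < R := by positivity
  have key : HasDerivAt (fun m : ℝ => ∑' k : ℕ, m ^ k / (Nat.factorial k : ℝ) * f k)
      (∑' k : ℕ, (k * m ^ (k - 1)) / (Nat.factorial k : ℝ) * f k) m := by
    refine hasDerivAt_tsum_of_isPreconnected (t := Metric.ball (0 : ℝ) R)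
      (u := fun k : ℕ => (k * R ^ (k - 1)) / (Nat.factorial k : ℝ) * (C * 2 ^ k))
      (g := fun k m => m ^ k / (Nat.factorial k : ℝ) * f k)
      (g' := fun k m => (k * m ^ (k - 1)) / (Nat.factorial k : ℝ) * f k) (y₀ := 0)
      ?_ Metric.isOpen_ball (convex_ball _ _).isPreconnected ?_ ?_ ?_ (summable_aux hf0) ?_
    · rw [← summable_nat_add_iff 1]
      refine (summable_pow2 R (2 * C)).congr fun k => ?_
      rw [Nat.factorial_succ, Nat.add_sub_cancel]
      push_cast
      have : (k : ℝ) + 1 ≠ 0 := by positivity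
      have h2 : (Nat.factorial k : ℝ) ≠ 0 := by positivity
      field_simp
      try ring
    · intro n y _
      exact ((hasDerivAt_pow n y).div_const _).mul_const _
    · intro n y hy
      rw [Metric.mem_ball, dist_zero_right, Real.norm_eq_abs] at hy
      rw [norm_mul, norm_div, norm_mul, norm_pow, Real.norm_eq_abs, Real.norm_eq_abs,
        Real.norm_eq_abs, Real.norm_eq_abs, Nat.abs_cast, Nat.abs_cast]
      gcongr
      exact hf n
    · simpa using hR
    · simp [R]
  convert key using 1
  have hs : Summable (fun k : ℕ => (k * m ^ (k - 1)) / (Nat.factorial k : ℝ) * f k) := by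
    rw [← summable_nat_add_iff 1]
    refine (summable_aux (m := m) hf0.succ).congr fun k => ?_
    rw [Nat.factorial_succ, Nat.add_sub_cancel]
    push_cast
    have : (k : ℝ) + 1 ≠ 0 := by positivity
    have h2 : (Nat.factorial k : ℝ) ≠ 0 := by positivity
    field_simp
  rw [hs.tsum_eq_zero_add]
  simp only [Nat.cast_zero, zero_mul, zero_div, zero_add]
  refine tsum_congr fun k => ?_
  rw [Nat.factorial_succ, Nat.add_sub_cancel]
  push_cast
  have : (k : ℝ) + 1 ≠ 0 := by positivity
  have h2 : (Nat.factorial k : ℝ) ≠ 0 := by positivity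
  field_simp

lemma hasDeriv_Ex {f : ℕ → ℝ} (hf : Bd f) (m : ℝ) :
    HasDerivAt (fun m : ℝ => Ex m f) (Ex m (fun k => f (k + 1)) - Ex m f) m := by
  have h1 := (((hasDerivAt_id m).neg).exp).mul (hasDeriv_aux hf m)
  have : (fun m : ℝ => Ex m f) = fun m : ℝ =>
      Real.exp (-m) * ∑' k : ℕ, m ^ k / (Nat.factorial k : ℝ) * f k := by
    funext m; exact Ex_eq m f
  rw [this]
  refine h1.congr_deriv ?_
  rw [Ex_eq, Ex_eq]
  simp only [id, Pi.neg_apply]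
  ring

lemma Ex_add {m : ℝ} {f g : ℕ → ℝ} (hf : Bd f) (hg : Bd g) :
    Ex m (fun k => f k + g k) = Ex m f + Ex m g := by
  have := (hasSum_PW (m := m) hf).add (hasSum_PW (m := m) hg)
  refine HasSum.tsum_eq (this.congr_fun ?_) 
  intro k; ring

lemma Ex_const_mul {m : ℝ} (c : ℝ) {f : ℕ → ℝ} :
    Ex m (fun k => c * f k) = c * Ex m f := by
  unfold Ex
  rw [← tsum_mul_left]
  exact tsum_congr fun k => by ring

lemma PW_nonneg {m : ℝ} (hm : 0 ≤ m) (k : ℕ) : 0 ≤ PW m k := by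
  unfold PW; positivity

lemma Ex_mono {m : ℝ} (hm : 0 ≤ m) {f g : ℕ → ℝ} (hf : Bd f) (hg : Bd g) (h : ∀ k, f k ≤ g k) :
    Ex m f ≤ Ex m g :=
  Summable.tsum_le_tsum (fun k => mul_le_mul_of_nonneg_left (h k) (PW_nonneg hm k))
    (summable_PW hf) (summable_PW hg)

lemma exp_tsum (m : ℝ) : ∑' k : ℕ, m ^ k / (Nat.factorial k : ℝ) = Real.exp m := by
  rw [Real.exp_eq_exp_ℝ, NormedSpace.exp_eq_tsum_div]

lemma Ex_const (m c : ℝ) : Ex m (fun _ => c) = c := by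
  rw [Ex_eq, tsum_mul_right, exp_tsum, ← mul_assoc, ← Real.exp_add]; simp

lemma Ex_id (m : ℝ) : Ex m (fun k => (k : ℝ)) = m := by
  have hs := summable_aux (m := m) Bd.id
  rw [Ex_eq, hs.tsum_eq_zero_add]
  have : ∀ k : ℕ, m ^ (k + 1) / (Nat.factorial (k + 1) : ℝ) * ((k + 1 : ℕ) : ℝ)
      = m * (m ^ k / (Nat.factorial k : ℝ)) := by
    intro k
    rw [Nat.factorial_succ]
    push_cast
    have : (k : ℝ) + 1 ≠ 0 := by positivity
    have h2 : (Nat.factorial k : ℝ) ≠ 0 := by positivity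
    field_simp
    try ring
  rw [tsum_congr this, tsum_mul_left, exp_tsum]
  simp only [Nat.cast_zero, mul_zero, zero_add]
  rw [mul_left_comm, ← Real.exp_add]; simp

lemma Bd.inv : Bd (fun k => 1 / ((k : ℝ) + 1)) := Bd.of_le fun k => by
  have : (0 : ℝ) < k + 1 := by positivity
  rw [abs_of_pos (by positivity), div_le_iff₀ this]
  have : (0 : ℝ) ≤ k := by positivity
  nlinarith

lemma Ex_inv {m : ℝ} (hm : 0 < m) :
    Ex m (fun k => 1 / ((k : ℝ) + 1)) = (1 - Real.exp (-m)) / m := by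
  have h1 : Real.exp m = 1 + ∑' k : ℕ, m ^ (k + 1) / (Nat.factorial (k + 1) : ℝ) := by
    rw [← exp_tsum, (Real.summable_pow_div_factorial m).tsum_eq_zero_add]; simp
  have : ∀ k : ℕ, m ^ k / (Nat.factorial k : ℝ) * (1 / ((k : ℝ) + 1))
      = m⁻¹ * (m ^ (k + 1) / (Nat.factorial (k + 1) : ℝ)) := by
    intro k
    rw [Nat.factorial_succ]
    push_cast
    have : (k : ℝ) + 1 ≠ 0 := by positivity
    have h2 : (Nat.factorial k : ℝ) ≠ 0 := by positivity
    field_simp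
    ring
  rw [Ex_eq, tsum_congr this, tsum_mul_left, ← sub_eq_iff_eq_add'.mpr h1]
  have : Real.exp (-m) * Real.exp m = 1 := by rw [← Real.exp_add]; simp
  field_simp
  linear_combination this

noncomputable def hh (k : ℕ) : ℝ := (harmonic k : ℝ) - Real.eulerMascheroniConstant

noncomputable def cc (k : ℕ) : ℝ := 1 / (6 * (2 * (k : ℝ) + 1) ^ 2)

lemma hh_succ (k : ℕ) : hh (k + 1) = hh k + 1 / ((k : ℝ) + 1) := by
  unfold hh
  rw [harmonic_succ]
  push_cast
  rw [one_div]; ring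

lemma Bd.hh : Bd hh := Bd.of_le fun k => by
  have h1 := Real.one_half_lt_eulerMascheroniConstant
  have h2 := Real.eulerMascheroniConstant_lt_two_thirds
  have h3 : ∀ k : ℕ, -1 ≤ _root_.hh k ∧ _root_.hh k ≤ k := by
    intro k
    induction k with
    | zero => simp [_root_.hh]; constructor <;> linarith
    | succ n ih =>
      rw [hh_succ]
      have h4 : (0 : ℝ) < n + 1 := by positivity
      have h5 : 1 / ((n : ℝ) + 1) ≤ 1 := by
        rw [div_le_one h4]; linarith [(Nat.cast_nonneg n : (0 : ℝ) ≤ n)]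
      have h6 : 0 < 1 / ((n : ℝ) + 1) := by positivity
      push_cast
      constructor <;> linarith
  have := h3 k
  have h4 : (0 : ℝ) ≤ k := by positivity
  rw [abs_le]; constructor <;> linarith

lemma cc_pos (k : ℕ) : 0 < cc k := by unfold cc; positivity

lemma cc_le (k : ℕ) : cc k ≤ 1 / ((k : ℝ) + 1) := by
  unfold cc
  have : (0 : ℝ) ≤ k := by positivity
  gcongr
  nlinarith

lemma Bd.cc : Bd cc := Bd.of_le fun k => by
  rw [abs_of_pos (cc_pos k)]
  refine (cc_le k).trans ?_
  have h4 : (0 : ℝ) < (k : ℝ) + 1 := by positivity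
  have : (0 : ℝ) ≤ k := by positivity
  rw [div_le_iff₀ h4]; nlinarith

lemma log_step (k : ℕ) :
    Real.log ((k : ℝ) + 1 + 1 / 2) - Real.log ((k : ℝ) + 1 / 2)
      ≤ 1 / ((k : ℝ) + 1) + (cc k - cc (k + 1)) := by
  have hk : (0 : ℝ) ≤ k := by positivity
  have ha : (0 : ℝ) < (k : ℝ) + 1 / 2 := by positivity
  have h := Real.hasSum_log_one_add_inv ha
  set t : ℝ := 1 / (2 * ((k : ℝ) + 1 / 2) + 1) with ht
  have ht' : t = 1 / (2 * (k + 1)) := by rw [ht]; congr 1; ring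
  have ht0 : 0 < t := by rw [ht']; positivity
  have ht1 : t < 1 := by
    rw [ht', div_lt_one (by positivity)]; linarith
  have ht2 : t ^ 2 < 1 := by nlinarith
  have hg : HasSum (fun j : ℕ => 2 / 3 * t ^ 3 * (t ^ 2) ^ j) (2 / 3 * t ^ 3 * (1 - t ^ 2)⁻¹) :=
    (hasSum_geometric_of_lt_one (by positivity) ht2).mul_left _
  have h' := (hasSum_nat_add_iff' 1).mpr h
  have hle := hasSum_le (fun j => ?_) h' hg
  · have e1 : 1 + ((k : ℝ) + 1 / 2)⁻¹ = ((k : ℝ) + 1 + 1 / 2) / ((k : ℝ) + 1 / 2) := by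
      field_simp; ring
    simp only [e1, Finset.range_one, Finset.sum_singleton, Nat.cast_zero] at hle
    rw [Real.log_div (by positivity) (by positivity)] at hle
    have e2 : 2 * (1 / (2 * (0 : ℝ) + 1)) * t ^ (2 * 0 + 1) = 1 / ((k : ℝ) + 1) := by
      rw [ht']; simp only [mul_zero, zero_add, pow_one]; field_simp
    rw [e2] at hle
    have e3 : 2 / 3 * t ^ 3 * (1 - t ^ 2)⁻¹ ≤ cc k - cc (k + 1) := by
      have e4 : 1 - t ^ 2 = (2 * k + 1) * (2 * k + 3) / (2 * (k + 1)) ^ 2 := by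
        rw [ht']; field_simp; ring
      have e5 : cc k - cc (k + 1) - 2 / 3 * t ^ 3 * (1 - t ^ 2)⁻¹
          = 1 / (3 * ((k : ℝ) + 1) * ((2 * k + 1) * (2 * k + 3)) ^ 2) := by
        rw [e4, ht']; unfold cc; push_cast
        have : (2 * ((k : ℝ) + 1) + 1) = 2 * k + 3 := by ring
        rw [this]
        field_simp
        ring
      have : 0 ≤ 1 / (3 * ((k : ℝ) + 1) * ((2 * k + 1) * (2 * k + 3)) ^ 2) := by positivity
      linarith
    linarith
  · have e : 2 / 3 * t ^ 3 * (t ^ 2) ^ j = 2 * (1 / 3) * t ^ (2 * (j + 1) + 1) := by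
      rw [← pow_mul]; ring
    rw [e]
    gcongr
    push_cast
    linarith [(Nat.cast_nonneg j : (0 : ℝ) ≤ j)]

lemma hh_le (k : ℕ) : hh k ≤ Real.log ((k : ℝ) + 1 / 2) + cc k := by
  have hmono : Monotone (fun k : ℕ => hh k - Real.log ((k : ℝ) + 1 / 2) - cc k) := by
    refine monotone_nat_of_le_succ fun k => ?_
    have := log_step k
    rw [hh_succ]; push_cast
    linarith
  have hlim : Filter.Tendsto (fun k : ℕ => hh k - Real.log ((k : ℝ) + 1 / 2) - cc k)
      Filter.atTop (nhds 0) := by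
    have h1 := Real.tendsto_harmonic_sub_log
    have h2 : Filter.Tendsto (fun k : ℕ => cc k) Filter.atTop (nhds 0) :=
      squeeze_zero (fun k => (cc_pos k).le) cc_le tendsto_one_div_add_atTop_nhds_zero_nat
    have h3 : Filter.Tendsto (fun k : ℕ => Real.log ((k : ℝ) + 1 / 2) - Real.log k)
        Filter.atTop (nhds 0) :=
      (Real.tendsto_log_comp_add_sub_log (1 / 2)).comp tendsto_natCast_atTop_atTop
    have := ((h1.sub_const Real.eulerMascheroniConstant).sub h3).sub h2
    simp only [sub_self] at this
    refine this.congr fun k => ?_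
    unfold hh; ring
  have := hmono.ge_of_tendsto hlim k
  linarith

lemma hh_ge (k : ℕ) : Real.log ((k : ℝ) + 1) - 1 / ((k : ℝ) + 1) ≤ hh k := by
  have h := Real.eulerMascheroniConstant_lt_eulerMascheroniSeq' (k + 1)
  unfold Real.eulerMascheroniSeq' at h
  rw [if_neg (by omega)] at h
  have h2 := hh_succ k
  unfold hh at *
  push_cast at h
  linarith

lemma Ex_hh_ge {m : ℝ} (hm : 0 < m) : Real.log m - 1 / m ≤ Ex m hh := by
  have h1 : Ex m (fun k => (Real.log m + 1) + (-(m + 1)) * (1 / ((k : ℝ) + 1))) ≤ Ex m hh := by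
    refine Ex_mono hm.le ((Bd.const _).add (Bd.inv.const_mul _)) Bd.hh fun k => ?_
    refine le_trans ?_ (hh_ge k)
    have hk : (0 : ℝ) < k + 1 := by positivity
    have := Real.one_sub_inv_le_log_of_pos (show 0 < ((k : ℝ) + 1) / m by positivity)
    rw [Real.log_div hk.ne' hm.ne', inv_div] at this
    have e : m / ((k : ℝ) + 1) = m * (1 / ((k : ℝ) + 1)) := by ring
    rw [e] at this
    linarith
  rw [Ex_add (Bd.const _) (Bd.inv.const_mul _), Ex_const, Ex_const_mul, Ex_inv hm] at h1
  refine le_trans ?_ h1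
  have : (m + 1) * ((1 - Real.exp (-m)) / m) ≤ 1 + 1 / m := by
    have e : 1 + 1 / m = (m + 1) * (1 / m) := by field_simp
    rw [e]
    have := Real.exp_pos (-m)
    gcongr
    linarith
  linarith

lemma Ex_hh_ge' {m : ℝ} (hm : 0 < m) : Real.log m + Real.exp (-m) / (m + 1) ≤ Ex m hh := by
  set f : ℝ → ℝ := fun m => Ex m hh - Real.log m - Real.exp (-m) / (m + 1) with hf
  have hd : ∀ x : ℝ, 0 < x → HasDerivAt f (-(Real.exp (-x) / (x * (x + 1) ^ 2))) x := by
    intro x hx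
    have h1 := hasDeriv_Ex Bd.hh x
    have h2 := Real.hasDerivAt_log hx.ne'
    have h3 := (((hasDerivAt_id x).neg).exp).div ((hasDerivAt_id x).add_const 1)
      (show x + 1 ≠ 0 by positivity)
    refine ((h1.sub h2).sub h3).congr_deriv ?_
    have e : (fun k => hh (k + 1)) = fun k : ℕ => hh k + 1 / ((k : ℝ) + 1) := by
      funext k; exact hh_succ k
    rw [e, Ex_add Bd.hh Bd.inv, Ex_inv hx]
    simp only [id, Pi.neg_apply]
    field_simp
    ring
  have hanti : AntitoneOn f (Set.Ioi 0) := by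
    refine antitoneOn_of_deriv_nonpos (convex_Ioi 0)
      (fun x hx => (hd x hx).continuousAt.continuousWithinAt)
      (fun x hx => ?_) (fun x hx => ?_)
    · rw [interior_Ioi] at hx
      exact (hd x hx).differentiableAt.differentiableWithinAt
    · rw [interior_Ioi] at hx
      have hx' : 0 < x := hx
      rw [(hd x hx).deriv, neg_nonpos]
      positivity
  have hlim : Filter.Tendsto (fun M : ℝ => -(2 * M⁻¹)) Filter.atTop (nhds 0) := by
    simpa using (tendsto_inv_atTop_zero.const_mul (2 : ℝ)).neg
  have h0 : 0 ≤ f m := by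
    refine le_of_tendsto hlim ?_
    filter_upwards [Filter.eventually_ge_atTop m] with M hM
    have hM0 : 0 < M := lt_of_lt_of_le hm hM
    refine le_trans ?_ (hanti hm hM0 hM)
    have h1 := Ex_hh_ge hM0
    have h2 : Real.exp (-M) / (M + 1) ≤ 1 / M := by
      have : Real.exp (-M) ≤ 1 := by rw [Real.exp_le_one_iff]; linarith
      gcongr; linarith
    simp only [hf]
    rw [one_div] at *
    linarith
  simp only [hf] at h0
  linarith

lemma Bd.log : Bd (fun k => Real.log ((k : ℝ) + 1 / 2)) := Bd.of_le fun k => by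
  have hk : (0 : ℝ) ≤ k := by positivity
  have h1 := Real.log_le_sub_one_of_pos (show (0 : ℝ) < k + 1 / 2 by positivity)
  have h2 : Real.log (1 / 2) ≤ Real.log ((k : ℝ) + 1 / 2) :=
    Real.log_le_log (by norm_num) (by linarith)
  have h3 := Real.one_sub_inv_le_log_of_pos (show (0 : ℝ) < 1 / 2 by norm_num)
  norm_num at h3 h2
  rw [abs_le]; constructor <;> norm_num at * <;> linarith

lemma poly_ineq {m : ℝ} (hm : 0 < m) :
    0 < 0.02 + m * (0.02 - 1 / 6) + m ^ 2 / 2 * (0.02 - 1 / 27) + m ^ 4 / 24 * (0.02 - 4 / 294)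
      + m ^ 5 / 120 * (0.02 - 5 / 486) + m / (m + 1) := by
  have h : 0 < (0.02 + m * (0.02 - 1 / 6) + m ^ 2 / 2 * (0.02 - 1 / 27) + m ^ 4 / 24 * (0.02 - 4 / 294)
      + m ^ 5 / 120 * (0.02 - 5 / 486)) * (m + 1) + m := by
    nlinarith [mul_pos hm hm, pow_pos hm 3, mul_nonneg hm.le (sq_nonneg (m - 4)), mul_nonneg hm.le (sq_nonneg (m^2 - 4*m)), sq_nonneg (m^2-16), sq_nonneg (m^2-4*m), pow_pos hm 4, pow_pos hm 5, pow_pos hm 6, sq_nonneg (m^3-4*m^2), mul_nonneg hm.le (sq_nonneg (m^2 - 16))]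
  have e : 0.02 + m * (0.02 - 1 / 6) + m ^ 2 / 2 * (0.02 - 1 / 27) + m ^ 4 / 24 * (0.02 - 4 / 294)
      + m ^ 5 / 120 * (0.02 - 5 / 486) + m / (m + 1) = ((0.02 + m * (0.02 - 1 / 6) + m ^ 2 / 2 * (0.02 - 1 / 27) + m ^ 4 / 24 * (0.02 - 4 / 294)
      + m ^ 5 / 120 * (0.02 - 5 / 486)) * (m + 1) + m) / (m + 1) := by
    have : m + 1 ≠ 0 := by positivity
    field_simp
  rw [e]
  positivity

lemma Ex_cc_lt {m : ℝ} (hm : 0 < m) : m * Ex m cc < 0.02 + m * (Real.exp (-m) / (m + 1)) := by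
  have hs1 := (summable_aux (m := m) Bd.cc).mul_left m
  have hs2 := ((summable_nat_add_iff 1).mpr (Real.summable_pow_div_factorial m)).mul_left 0.02
  have h1 : Real.exp m = 1 + ∑' k : ℕ, m ^ (k + 1) / (Nat.factorial (k + 1) : ℝ) := by
    rw [← exp_tsum, (Real.summable_pow_div_factorial m).tsum_eq_zero_add]; simp
  have hterm : ∀ k : ℕ, 0.02 * (m ^ (k + 1) / (Nat.factorial (k + 1) : ℝ))
      - m * (m ^ k / (Nat.factorial k : ℝ) * cc k)
      = m ^ (k + 1) / (Nat.factorial (k + 1) : ℝ) * (0.02 - (k + 1) * cc k) := by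
    intro k
    rw [Nat.factorial_succ]
    push_cast
    have : (k : ℝ) + 1 ≠ 0 := by positivity
    have h2 : (Nat.factorial k : ℝ) ≠ 0 := by positivity
    field_simp
    try ring
  have h2 := Summable.sum_le_tsum (Finset.range 5) (fun k hk => ?_) (hs2.sub hs1)
  · rw [hs2.tsum_sub hs1, tsum_mul_left, tsum_mul_left] at h2
    rw [Finset.sum_congr rfl (fun k _ => hterm k)] at h2
    set A := ∑' k : ℕ, m ^ (k + 1) / (Nat.factorial (k + 1) : ℝ) with hA
    set B := ∑' k : ℕ, m ^ k / (Nat.factorial k : ℝ) * cc k with hB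
    clear_value A
    simp only [Finset.sum_range_succ, Finset.sum_range_zero] at h2
    have hc0 : cc 0 = 1 / 6 := by norm_num [cc]
    have hc1 : cc 1 = 1 / 54 := by norm_num [cc]
    have hc2 : cc 2 = 1 / 150 := by norm_num [cc]
    have hc3 : cc 3 = 1 / 294 := by norm_num [cc]
    have hc4 : cc 4 = 1 / 486 := by norm_num [cc]
    rw [hc0, hc1, hc2, hc3, hc4] at h2
    norm_num [Nat.factorial] at h2
    have h3 := poly_ineq hm
    norm_num at h3
    have h4 : m * Ex m cc * Real.exp m < (0.02 + m * (Real.exp (-m) / (m + 1))) * Real.exp m := by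
      have e0 : Real.exp (-m) * Real.exp m = 1 := by rw [← Real.exp_add]; simp
      have e1 : m * Ex m cc * Real.exp m
          = m * B := by
        rw [Ex_eq]
        linear_combination (m * B) * e0
      have e2 : (0.02 + m * (Real.exp (-m) / (m + 1))) * Real.exp m
          = 0.02 * Real.exp m + m / (m + 1) := by
        rw [div_eq_mul_inv, div_eq_mul_inv]
        linear_combination (m * (m + 1)⁻¹) * e0
      rw [e1, e2, h1]
      norm_num
      linarith
    exact lt_of_mul_lt_mul_right h4 (Real.exp_pos m).le
  · rw [hterm]
    have hk2 : 5 ≤ k := by simpa using hk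
    have hk3 : (5 : ℝ) ≤ k := by exact_mod_cast hk2
    refine mul_nonneg (by positivity) ?_
    unfold cc
    rw [sub_nonneg, mul_one_div, div_le_iff₀ (by positivity)]
    nlinarith

lemma core {m : ℝ} (hm : 0 < m) :
    Real.log m - Ex m (fun k => Real.log ((k : ℝ) + 1 / 2)) < 0.02 / m := by
  have h1 : Ex m (fun k => hh k + (-1) * cc k) ≤ Ex m (fun k => Real.log ((k : ℝ) + 1 / 2)) :=
    Ex_mono hm.le (Bd.hh.add (Bd.cc.const_mul _)) Bd.log fun k => by linarith [hh_le k]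
  rw [Ex_add Bd.hh (Bd.cc.const_mul _), Ex_const_mul] at h1
  have h2 := Ex_hh_ge' hm
  have h3 := Ex_cc_lt hm
  rw [lt_div_iff₀ hm]
  nlinarith

noncomputable def LG (k : ℕ) : ℝ := Real.log (Real.Gamma ((k : ℝ) + 1 / 2))

lemma LG_succ (k : ℕ) : LG (k + 1) = LG k + Real.log ((k : ℝ) + 1 / 2) := by
  unfold LG
  have hk : (0 : ℝ) < (k : ℝ) + 1 / 2 := by positivity
  push_cast
  rw [show (k : ℝ) + 1 + 1 / 2 = ((k : ℝ) + 1 / 2) + 1 by ring, Real.Gamma_add_one hk.ne',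
    Real.log_mul hk.ne' (Real.Gamma_pos_of_pos hk).ne', add_comm]

lemma Bd.LG : Bd LG := by
  obtain ⟨C, hC, h⟩ := Bd.log
  refine ⟨|_root_.LG 0| + C, by positivity, fun k => ?_⟩
  induction k with
  | zero => simp; exact hC
  | succ n ih =>
    rw [LG_succ, pow_succ]
    refine (abs_add_le _ _).trans ?_
    have := h n
    have h2 : 0 ≤ |_root_.LG 0| * 2 ^ n := by positivity
    nlinarith

lemma Phi_lt {a b : ℝ} (ha : 0 < a) (hab : a < b) :
    b * Real.log b - b - Ex b LG - 0.02 * Real.log b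
      < a * Real.log a - a - Ex a LG - 0.02 * Real.log a := by
  set f : ℝ → ℝ := fun b => b * Real.log b - b - Ex b LG - 0.02 * Real.log b with hf
  have hd : ∀ x : ℝ, 0 < x → HasDerivAt f
      (Real.log x - Ex x (fun k => Real.log ((k : ℝ) + 1 / 2)) - 0.02 / x) x := by
    intro x hx
    have h1 := hasDeriv_Ex Bd.LG x
    have h2 := Real.hasDerivAt_log hx.ne'
    have h3 := (hasDerivAt_id x).mul h2
    refine (((h3.sub (hasDerivAt_id x)).sub h1).sub (h2.const_mul 0.02)).congr_deriv ?_
    have e : (fun k => LG (k + 1)) = fun k : ℕ => LG k + Real.log ((k : ℝ) + 1 / 2) := by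
      funext k; exact LG_succ k
    rw [e, Ex_add Bd.LG Bd.log]
    simp only [id]
    have e2 : x * x⁻¹ = 1 := mul_inv_cancel₀ hx.ne'
    rw [div_eq_mul_inv]
    linear_combination e2
  have hanti : StrictAntiOn f (Set.Ioi 0) := by
    refine strictAntiOn_of_deriv_neg (convex_Ioi 0)
      (fun x hx => (hd x hx).continuousAt.continuousWithinAt) (fun x hx => ?_)
    rw [interior_Ioi] at hx
    have hx' : 0 < x := hx
    rw [(hd x hx).deriv]
    linarith [core hx']
  exact hanti ha (ha.trans hab) hab

lemma hasSum_pi : ∀ (d : ℕ) (g : Fin d → ℕ → ℝ) (a : Fin d → ℝ),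
    (∀ i, HasSum (g i) (a i)) →
    HasSum (fun y : Fin d → ℕ => ∏ i, g i (y i)) (∏ i, a i) := by
  intro d
  induction d with
  | zero =>
    intro g a _
    simp only [Finset.univ_eq_empty, Finset.prod_empty]
    exact hasSum_unique (fun _ : Fin 0 → ℕ => (1 : ℝ))
  | succ n ih =>
    intro g a h
    have h1 := ih (fun i => g i.succ) (fun i => a i.succ) (fun i => h i.succ)
    have hs : Summable (fun z : ℕ × (Fin n → ℕ) => g 0 z.1 * ∏ i : Fin n, g i.succ (z.2 i)) :=
      summable_mul_of_summable_norm (f := g 0)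
        (g := fun w : Fin n → ℕ => ∏ i : Fin n, g i.succ (w i)) (h 0).summable.norm h1.summable.norm
    have h3 := (h 0).mul h1 hs
    rw [Fin.prod_univ_succ, ← (Fin.consEquiv (fun _ => ℕ)).hasSum_iff]
    refine h3.congr_fun fun z => ?_
    simp [Fin.prod_univ_succ, Fin.consEquiv]

lemma hasSum_marg {d : ℕ} (p : Fin d → ℕ → ℝ) (hp : ∀ i, HasSum (p i) 1)
    (f : Fin d → ℕ → ℝ) (a : Fin d → ℝ) (h : ∀ i, HasSum (fun k => p i k * f i k) (a i)) :
    HasSum (fun y : Fin d → ℕ => (∏ i, p i (y i)) * ∑ i, f i (y i)) (∑ i, a i) := by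
  have h1 : ∀ i, HasSum (fun y : Fin d → ℕ => (∏ j, p j (y j)) * f i (y i)) (a i) := by
    intro i
    have := hasSum_pi d (fun j k => if j = i then p j k * f j k else p j k)
      (fun j => if j = i then a j else 1) (fun j => by
        by_cases hj : j = i
        · simpa [hj] using h i
        · simpa [hj] using hp j)
    rw [Finset.prod_ite_eq' Finset.univ i a, if_pos (Finset.mem_univ _)] at this
    refine this.congr_fun fun y => ?_
    have e : ∀ j, (if j = i then p j (y j) * f j (y j) else p j (y j))
        = p j (y j) * (if j = i then f j (y j) else 1) := by
      intro j; split_ifs <;> simp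
    simp only [e]
    rw [Finset.prod_mul_distrib, Finset.prod_ite_eq' Finset.univ i (fun j => f j (y j)),
      if_pos (Finset.mem_univ _)]
  refine (hasSum_sum (s := Finset.univ) fun i _ => h1 i).congr_fun fun y => ?_
  rw [Finset.mul_sum]

lemma PW_conv (a b : ℝ) (n : ℕ) :
    ∑ z ∈ Finset.HasAntidiagonal.antidiagonal n, PW a z.1 * PW b z.2 = PW (a + b) n := by
  unfold PW
  rw [(Commute.all a b).add_pow', Finset.mul_sum, Finset.sum_div, neg_add, Real.exp_add]
  refine Finset.sum_congr rfl fun z hz => ?_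
  rw [Finset.HasAntidiagonal.mem_antidiagonal] at hz
  subst hz
  have h := Nat.add_choose_mul_factorial_mul_factorial z.1 z.2
  rw [← Nat.choose_symm_add] at h
  have h' : ((z.1 + z.2).choose z.1 : ℝ) * (z.1.factorial : ℝ) * (z.2.factorial : ℝ)
      = ((z.1 + z.2).factorial : ℝ) := by exact_mod_cast h
  rw [← h', nsmul_eq_mul]
  have h1 : (Nat.factorial z.1 : ℝ) ≠ 0 := by positivity
  have h2 : (Nat.factorial z.2 : ℝ) ≠ 0 := by positivity
  have h3 : ((z.1 + z.2).choose z.1 : ℝ) ≠ 0 := by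
    have := Nat.choose_pos (Nat.le_add_right z.1 z.2)
    positivity
  field_simp

lemma Bd.pow2 : Bd (fun k => (2 : ℝ) ^ k) :=
  ⟨1, by norm_num, fun k => by rw [abs_of_pos (by positivity)]; simp⟩

lemma Bd.shift {f : ℕ → ℝ} (hf : Bd f) (x : ℕ) : Bd (fun y => f (x + y)) := by
  obtain ⟨C, hC, hf⟩ := hf
  refine ⟨C * 2 ^ x, by positivity, fun k => (hf _).trans (le_of_eq ?_)⟩
  rw [pow_add]; ring

lemma conv {a b : ℝ} (ha : 0 ≤ a) (hb : 0 ≤ b) {f : ℕ → ℝ} (hf : Bd f) :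
    HasSum (fun x => PW a x * Ex b (fun y => f (x + y))) (Ex (a + b) f) := by
  have hs : Summable (fun z : ℕ × ℕ => PW a z.1 * PW b z.2 * f (z.1 + z.2)) := by
    obtain ⟨C, hC, hf⟩ := hf
    have h1 := summable_PW (m := a) Bd.pow2
    have h2 := summable_PW (m := b) Bd.pow2
    have h3 := (h1.mul_of_nonneg h2 (fun k => mul_nonneg (PW_nonneg ha k) (by positivity))
      (fun k => mul_nonneg (PW_nonneg hb k) (by positivity))).mul_left C
    refine Summable.of_norm_bounded h3 fun z => ?_
    rw [norm_mul, Real.norm_eq_abs, Real.norm_eq_abs,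
      abs_of_nonneg (mul_nonneg (PW_nonneg ha _) (PW_nonneg hb _))]
    refine (mul_le_mul_of_nonneg_left (hf _)
      (mul_nonneg (PW_nonneg ha _) (PW_nonneg hb _))).trans (le_of_eq ?_)
    rw [pow_add]; ring
  have h1 := hs.hasSum.prod_fiberwise (fun x => by
    have := (hasSum_PW (m := b) (hf.shift x)).mul_left (PW a x)
    refine this.congr_fun fun y => ?_
    simp only
    ring)
  convert h1 using 1
  rw [← Finset.HasAntidiagonal.sigmaAntidiagonalEquivProd.tsum_eq]
  have hs' := (Finset.HasAntidiagonal.sigmaAntidiagonalEquivProd.summable_iff).mpr hs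
  simp only [Function.comp_def] at hs'
  rw [hs'.tsum_sigma' (fun n => (hasSum_fintype _).summable)]
  unfold Ex
  refine tsum_congr fun n => ?_
  rw [tsum_fintype, ← PW_conv, Finset.sum_mul, ← Finset.sum_coe_sort]
  refine Finset.sum_congr rfl fun z _ => ?_
  have hz := Finset.HasAntidiagonal.mem_antidiagonal.mp z.2
  simp [Finset.HasAntidiagonal.sigmaAntidiagonalEquivProd, hz]

noncomputable def ell (r s l : ℝ) (x y : ℕ) : ℝ :=
  -(s * l) + (y : ℝ) * Real.log ((r + s) * l) + ((x : ℝ) + 1 / 2) * Real.log ((r + s) / r)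
    - LG (x + y) + LG x

noncomputable def MM (r s l : ℝ) (x : ℕ) : ℝ :=
  -(s * l) + (s * l) * Real.log ((r + s) * l) + ((x : ℝ) + 1 / 2) * Real.log ((r + s) / r)
    - Ex (s * l) (fun y => LG (x + y)) + LG x

noncomputable def VV (r s l : ℝ) : ℝ :=
  -(s * l) + (s * l) * Real.log ((r + s) * l) + (r * l + 1 / 2) * Real.log ((r + s) / r)
    - Ex (r * l + s * l) LG + Ex (r * l) LG

lemma hasSum_one (m : ℝ) : HasSum (PW m) 1 := by
  have := hasSum_PW (m := m) (Bd.const 1)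
  rw [Ex_const] at this
  simpa using this

lemma hasSum_id (m : ℝ) : HasSum (fun k : ℕ => PW m k * (k : ℝ)) m := by
  have := hasSum_PW (m := m) Bd.id
  rwa [Ex_id] at this

lemma hasSum_ell (r s l : ℝ) (x : ℕ) :
    HasSum (fun y => PW (s * l) y * ell r s l x y) (MM r s l x) := by
  have h1 := (hasSum_one (s * l)).mul_left
    (-(s * l) + ((x : ℝ) + 1 / 2) * Real.log ((r + s) / r) + LG x)
  have h2 := (hasSum_id (s * l)).mul_left (Real.log ((r + s) * l))
  have h3 := hasSum_PW (m := s * l) (Bd.LG.shift x)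
  convert (h1.add h2).sub h3 using 1
  · rfl
  · funext y; unfold ell; ring
  · unfold MM; ring

lemma hasSum_MM {r s l : ℝ} (hr : 0 < r) (hs : 0 < s) (hl : 0 < l) :
    HasSum (fun x => PW (r * l) x * MM r s l x) (VV r s l) := by
  have h1 := (hasSum_one (r * l)).mul_left
    (-(s * l) + (s * l) * Real.log ((r + s) * l) + (1 / 2) * Real.log ((r + s) / r))
  have h2 := (hasSum_id (r * l)).mul_left (Real.log ((r + s) / r))
  have h3 := hasSum_PW (m := r * l) Bd.LG
  have h4 := conv (mul_pos hr hl).le (mul_pos hs hl).le Bd.LG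
  convert ((h1.add h2).add h3).sub h4 using 1
  · rfl
  · funext y; unfold MM; ring
  · unfold VV; ring

lemma VV_lt {r s l : ℝ} (hr : 0 < r) (hs : 0 < s) (hl : 0 < l) :
    VV r s l < 0.52 * Real.log ((r + s) / r) := by
  have ha : 0 < r * l := mul_pos hr hl
  have hb : 0 < s * l := mul_pos hs hl
  have h := Phi_lt ha (show r * l < r * l + s * l by linarith)
  unfold VV
  have e1 : Real.log ((r + s) / r) = Real.log (r * l + s * l) - Real.log (r * l) := by
    rw [← Real.log_div (by positivity) ha.ne']
    congr 1
    field_simp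
  rw [e1, show (r + s) * l = r * l + s * l by ring]
  norm_num at h ⊢
  linarith

lemma log_pmf (d : ℕ) (c : ℝ) (lam : Fin d → ℝ) (hc : ∀ i, 0 < c * lam i) (y : Fin d → ℕ) :
    0 < poissonPMF d c lam y ∧ Real.log (poissonPMF d c lam y)
      = ∑ i, (-(c * lam i) + (y i : ℝ) * Real.log (c * lam i)
        - Real.log (Nat.factorial (y i) : ℝ)) := by
  unfold poissonPMF
  have hpos : ∀ i, 0 < Real.exp (-(c * lam i)) * (c * lam i) ^ (y i) / (Nat.factorial (y i) : ℝ) := by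
    intro i
    have := hc i
    positivity
  refine ⟨Finset.prod_pos fun i _ => hpos i, ?_⟩
  rw [Real.log_prod (fun i _ => (hpos i).ne')]
  refine Finset.sum_congr rfl fun i _ => ?_
  have h1 := pow_pos (hc i) (y i)
  rw [Real.log_div (by positivity) (by positivity), Real.log_mul (by positivity) h1.ne',
    Real.log_exp, Real.log_pow]

lemma log_pJ (d : ℕ) {r s : ℝ} (hr : 0 < r) (hs : 0 < s) (x y : Fin d → ℕ) :
    0 < pJ d r s x y ∧ Real.log (pJ d r s x y)
      = ∑ i, (((x i : ℝ) + 1 / 2) * Real.log (r / (r + s)) + (y i : ℝ) * Real.log (s / (r + s))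
        + (LG (x i + y i) - (LG (x i) + Real.log (Nat.factorial (y i) : ℝ)))) := by
  unfold pJ
  have hg1 : ∀ i, 0 < Real.Gamma ((x i : ℝ) + (y i : ℝ) + 1 / 2) := fun i =>
    Real.Gamma_pos_of_pos (by positivity)
  have hg2 : ∀ i, 0 < Real.Gamma ((x i : ℝ) + 1 / 2) := fun i =>
    Real.Gamma_pos_of_pos (by positivity)
  have hpos : ∀ i, 0 < Real.Gamma ((x i : ℝ) + (y i : ℝ) + 1 / 2)
        / (Real.Gamma ((x i : ℝ) + 1 / 2) * (Nat.factorial (y i) : ℝ)) := by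
    intro i
    have h1 := hg1 i
    have h2 := hg2 i
    positivity
  have hprod : 0 < ∏ i, Real.Gamma ((x i : ℝ) + (y i : ℝ) + 1 / 2)
        / (Real.Gamma ((x i : ℝ) + 1 / 2) * (Nat.factorial (y i) : ℝ)) :=
    Finset.prod_pos fun i _ => hpos i
  have hr' : 0 < r / (r + s) := by positivity
  have hs' : 0 < s / (r + s) := by positivity
  have hA := Real.rpow_pos_of_pos hr' ((∑ i, (x i : ℝ)) + (d : ℝ) / 2)
  have hB := pow_pos hs' (∑ i, y i)
  refine ⟨by positivity, ?_⟩
  rw [Real.log_mul (by positivity) hprod.ne', Real.log_mul hA.ne' hB.ne', Real.log_rpow hr',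
    Real.log_pow, Real.log_prod (fun i _ => (hpos i).ne'), Finset.sum_add_distrib,
    Finset.sum_add_distrib, ← Finset.sum_mul, ← Finset.sum_mul, Finset.sum_add_distrib]
  congr 1
  · simp
    left; ring
  · refine Finset.sum_congr rfl fun i _ => ?_
    rw [Real.log_div (hg1 i).ne' (mul_pos (hg2 i) (by positivity)).ne',
      Real.log_mul (hg2 i).ne' (by positivity)]
    unfold LG
    push_cast
    rfl

lemma log_ratio (d : ℕ) {r s : ℝ} (hr : 0 < r) (hs : 0 < s)
    (lam : Fin d → ℝ) (hlam : ∀ i, 0 < lam i) (x y : Fin d → ℕ) :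
    Real.log (poissonPMF d s lam y / pJ d r s x y) = ∑ i, ell r s (lam i) (x i) (y i) := by
  obtain ⟨h1, h2⟩ := log_pmf d s lam (fun i => mul_pos hs (hlam i)) y
  obtain ⟨h3, h4⟩ := log_pJ d hr hs x y
  rw [Real.log_div h1.ne' h3.ne', h2, h4, ← Finset.sum_sub_distrib]
  refine Finset.sum_congr rfl fun i _ => ?_
  have hl := hlam i
  have hrs : 0 < r + s := by positivity
  unfold ell
  rw [Real.log_mul hs.ne' hl.ne', Real.log_mul hrs.ne' hl.ne', Real.log_div hr.ne' hrs.ne',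
    Real.log_div hs.ne' hrs.ne', Real.log_div hrs.ne' hr.ne']
  ring

theorem stmt_2 (d : ℕ) (hd : 1 ≤ d) (r s : ℝ) (hr : 0 < r) (hs : 0 < s)
    (lam : Fin d → ℝ) (hlam : ∀ i, 0 < lam i) :
    klRisk d r s lam (fun x y => pJ d r s x y)
      < 0.52 * (d : ℝ) * Real.log ((r + s) / r) := by
  have hin : ∀ x : Fin d → ℕ, ∑' y : Fin d → ℕ, poissonPMF d s lam y *
      Real.log (poissonPMF d s lam y / pJ d r s x y) = ∑ i, MM r s (lam i) (x i) := by
    intro x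
    have := hasSum_marg (fun i => PW (s * lam i)) (fun i => hasSum_one _)
      (fun i => ell r s (lam i) (x i)) (fun i => MM r s (lam i) (x i))
      (fun i => hasSum_ell r s (lam i) (x i))
    rw [← this.tsum_eq]
    refine tsum_congr fun y => ?_
    rw [log_ratio d hr hs lam hlam]
    rfl
  have hout : klRisk d r s lam (fun x y => pJ d r s x y) = ∑ i, VV r s (lam i) := by
    have := hasSum_marg (fun i => PW (r * lam i)) (fun i => hasSum_one _)
      (fun i => MM r s (lam i)) (fun i => VV r s (lam i))
      (fun i => hasSum_MM hr hs (hlam i))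
    rw [← this.tsum_eq]
    unfold klRisk
    refine tsum_congr fun x => ?_
    rw [hin x]
    rfl
  rw [hout]
  have hne : (Finset.univ : Finset (Fin d)).Nonempty := ⟨⟨0, hd⟩, Finset.mem_univ _⟩
  refine (Finset.sum_lt_sum_of_nonempty hne fun i _ => VV_lt hr hs (hlam i)).trans_eq ?_
  rw [Finset.sum_const, Finset.card_univ, Fintype.card_fin, nsmul_eq_mul]
  ring
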